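/- Let L_{j,i} ∈ R = K[x_0, x_1, …, x_n] (1 ≤ j ≤ n, 1 ≤ i ≤ ℓ_j, n ≥ 2) be linear forms satisfying condition (α), set f_j = ∏_{i=1}^{ℓ_j} L_{j,i} and I = (f_i f_j : 1 ≤ i < j ≤ n). Then the ideal I has height n−1 and the quotient ring R/I has Krull dimension 2 (so a complete grid or pseudo-grid of lines is a curve in ℙ^n). -/

import Mathlib

open MvPolynomial

/-- The height of an ideal `N` of a commutative ring: the infimum of the heights of the
prime ideals containing `N`. -/
noncomputable def idealHeight {T : Type} [CommRing T] (N : Ideal T) : ℕ∞ :=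
  ⨅ (p : PrimeSpectrum T) (_ : N ≤ p.asIdeal), Order.height p

namespace MvPolynomial

variable {K σ : Type*} [Field K]

open Classical in
/-- The `K`-algebra map setting the variables in `s` to zero. -/
noncomputable def killVars (K : Type*) [Field K] (s : Set σ) :
    MvPolynomial σ K →ₐ[K] MvPolynomial {i // i ∉ s} K :=
  aeval fun i => if h : i ∈ s then 0 else X ⟨i, h⟩

lemma killVars_X_of_mem {s : Set σ} {i : σ} (h : i ∈ s) : killVars K s (X i) = 0 := by
  simp [killVars, h]

lemma killVars_X_of_notMem {s : Set σ} {i : σ} (h : i ∉ s) :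
    killVars K s (X i) = X ⟨i, h⟩ := by
  simp [killVars, h]

lemma killVars_surjective (s : Set σ) : Function.Surjective (killVars K s) := by
  have h : (killVars K s).comp (rename Subtype.val) = AlgHom.id K _ := by
    ext1 i
    simp [killVars_X_of_notMem i.2]
  exact fun p => ⟨rename Subtype.val p, DFunLike.congr_fun h p⟩

lemma ker_killVars (s : Set σ) :
    RingHom.ker (killVars K s) = Ideal.span (X '' s : Set (MvPolynomial σ K)) := by
  apply le_antisymm
  · intro p hp
    have h : (Ideal.Quotient.mkₐ K (Ideal.span (X '' s))).comp
        ((rename Subtype.val).comp (killVars K s)) =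
        Ideal.Quotient.mkₐ K (Ideal.span (X '' s)) := by
      ext1 i
      by_cases hi : i ∈ s
      · simpa [killVars_X_of_mem hi] using (Ideal.Quotient.eq_zero_iff_mem.mpr
          (Ideal.subset_span (Set.mem_image_of_mem X hi))).symm
      · simp [killVars_X_of_notMem hi]
    have hp' := DFunLike.congr_fun h p
    rw [RingHom.mem_ker] at hp
    rw [← Ideal.Quotient.eq_zero_iff_mem]
    simpa [hp] using hp'.symm
  · rw [Ideal.span_le]
    rintro _ ⟨i, hi, rfl⟩
    exact killVars_X_of_mem hi

instance isPrime_span_X_image (s : Set σ) :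
    (Ideal.span (X '' s : Set (MvPolynomial σ K))).IsPrime :=
  ker_killVars (K := K) s ▸ RingHom.ker_isPrime _

lemma X_notMem_span_X_image {s : Set σ} {i : σ} (h : i ∉ s) :
    (X i : MvPolynomial σ K) ∉ Ideal.span (X '' s : Set (MvPolynomial σ K)) := by
  rw [← ker_killVars, RingHom.mem_ker, killVars_X_of_notMem h]
  exact X_ne_zero _

lemma ringKrullDim_quotient_span_X_image [Finite σ] (s : Set σ) :
    ringKrullDim (MvPolynomial σ K ⧸ Ideal.span (X '' s : Set (MvPolynomial σ K))) =
      Nat.card {i // i ∉ s} := by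
  rw [← ker_killVars, ringKrullDim_eq_of_ringEquiv
    (Ideal.quotientKerAlgEquivOfSurjective (killVars_surjective (K := K) s)).toRingEquiv]
  simp [MvPolynomial.ringKrullDim_of_isNoetherianRing]

lemma card_le_height_span_X_image (s : Finset σ) :
    (s.card : ℕ∞) ≤ (Ideal.span (X '' s : Set (MvPolynomial σ K))).height := by
  classical
  induction s using Finset.induction_on with
  | empty => simp
  | insert a s ha ih =>
    rw [Finset.card_insert_of_notMem ha, Nat.cast_add, Nat.cast_one]
    refine (add_le_add_left ih 1).trans (Ideal.height_add_one_le_of_lt_of_isPrime ?_)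
    refine lt_of_le_of_ne (Ideal.span_mono (Set.image_mono (by simp))) fun h => ?_
    refine X_notMem_span_X_image (K := K) (s := s) (i := a) (by simpa using ha) ?_
    rw [h]
    exact Ideal.subset_span ⟨a, by simp, rfl⟩

lemma height_span_X_image [Finite σ] (s : Finset σ) :
    (Ideal.span (X '' s : Set (MvPolynomial σ K))).height = s.card := by
  refine le_antisymm ?_ (card_le_height_span_X_image s)
  refine (Ideal.height_le_card_of_mem_minimalPrimes_span (s := X '' (s : Set σ))
    (s.finite_toSet.image _) (by simp [Ideal.minimalPrimes_eq_subsingleton_self])).trans ?_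
  exact_mod_cast (Set.ncard_image_le s.finite_toSet).trans (Set.ncard_coe_finset s).le

/-- Linearly independent linear forms, one fewer than the number of variables, are the images of
all variables but the first under some automorphism of the polynomial ring. -/
lemma exists_algEquiv_X_succ {n : ℕ} (v : Fin n → MvPolynomial (Fin (n + 1)) K)
    (hv : ∀ j, (v j).IsHomogeneous 1) (hli : LinearIndependent K v) :
    ∃ e : MvPolynomial (Fin (n + 1)) K ≃ₐ[K] MvPolynomial (Fin (n + 1)) K,
      ∀ j : Fin n, e (X j.succ) = v j := by
  have hX := linearIndependent_X (Fin (n + 1)) K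
  obtain ⟨i₀, hi₀⟩ : ∃ i, (X i : MvPolynomial (Fin (n + 1)) K) ∉
      Submodule.span K (Set.range v) := by
    by_contra! h
    have := FiniteDimensional.span_of_finite K (Set.finite_range v)
    have hle := Submodule.finrank_mono (Submodule.span_le.mpr (Set.range_subset_iff.mpr h))
    rw [finrank_span_eq_card hX, finrank_span_eq_card hli] at hle
    simp at hle
  set w : Fin (n + 1) → MvPolynomial (Fin (n + 1)) K := Fin.cons (X i₀) v with hw
  have hwli : LinearIndependent K w := linearIndependent_finCons.mpr ⟨hli, hi₀⟩
  have hspan : Submodule.span K (Set.range w) =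
      Submodule.span K (Set.range (X : Fin (n + 1) → MvPolynomial (Fin (n + 1)) K)) := by
    have := FiniteDimensional.span_of_finite K
      (Set.finite_range (X : Fin (n + 1) → MvPolynomial (Fin (n + 1)) K))
    refine Submodule.eq_of_le_of_finrank_eq ?_ ?_
    · rw [← homogeneousSubmodule_one_eq_span_X, Submodule.span_le, Set.range_subset_iff]
      exact Fin.cases (isHomogeneous_X K i₀) hv
    · rw [finrank_span_eq_card hX, finrank_span_eq_card hwli]
  have hsurj : Function.Surjective (aeval w : MvPolynomial (Fin (n + 1)) K →ₐ[K] _) := by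
    rw [← AlgHom.range_eq_top, ← Algebra.adjoin_range_eq_range_aeval, eq_top_iff, ← adjoin_range_X]
    refine Algebra.adjoin_le fun x hx => ?_
    refine Algebra.span_le_adjoin K (Set.range w) ?_
    rw [hspan]
    exact Submodule.subset_span hx
  have hinj : Function.Injective (aeval w : MvPolynomial (Fin (n + 1)) K →ₐ[K] _) := by
    rw [injective_iff_map_eq_zero]
    intro r hr
    by_contra h
    have hdim := ringKrullDim_succ_le_of_surjective (aeval w : _ →ₐ[K] _).toRingHom hsurj
      (mem_nonZeroDivisors_of_ne_zero h) hr
    simp only [MvPolynomial.ringKrullDim_of_isNoetherianRing, ringKrullDim_eq_zero_of_field,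
      Nat.card_eq_fintype_card, Fintype.card_fin] at hdim
    norm_cast at hdim
    omega
  exact ⟨AlgEquiv.ofBijective (aeval w) ⟨hinj, hsurj⟩, fun j => by simp [hw]⟩

/-- The ideal generated by linearly independent linear forms, two fewer than the number of
variables, is prime of height `n - 1` and its quotient ring has dimension two. -/
lemma span_linearForms_isPrime_height_ringKrullDim {n : ℕ}
    (v : Fin n → MvPolynomial (Fin (n + 1)) K)
    (hv : ∀ j, (v j).IsHomogeneous 1) (hli : LinearIndependent K v) (j₀ : Fin n) :
    (Ideal.span (v '' {j₀}ᶜ)).IsPrime ∧ (Ideal.span (v '' {j₀}ᶜ)).height = (n - 1 : ℕ) ∧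
      ringKrullDim (MvPolynomial (Fin (n + 1)) K ⧸ Ideal.span (v '' {j₀}ᶜ)) = 2 := by
  obtain ⟨e, he⟩ := exists_algEquiv_X_succ v hv hli
  set s : Finset (Fin (n + 1)) := ({j₀}ᶜ : Finset (Fin n)).map (Fin.succEmb n) with hs
  have hmap : Ideal.span (v '' {j₀}ᶜ) =
      (Ideal.span (X '' (s : Set (Fin (n + 1))))).map e.toRingEquiv := by
    rw [Ideal.map_span]
    congr 1
    simp [hs, Set.image_image, he]
  have hcard : s.card = n - 1 := by simp [hs, Finset.card_compl]
  refine ⟨?_, ?_, ?_⟩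
  · rw [hmap]
    exact Ideal.map_isPrime_of_equiv e.toRingEquiv
  · rw [hmap, RingEquiv.height_map, height_span_X_image, hcard]
  · rw [← ringKrullDim_eq_of_ringEquiv (Ideal.quotientEquiv _ _ e.toRingEquiv hmap),
      ringKrullDim_quotient_span_X_image]
    have hn := j₀.pos
    have : Nat.card {i // i ∉ (s : Set (Fin (n + 1)))} = 2 := by
      simp only [Finset.mem_coe, Nat.card_eq_fintype_card, Fintype.card_subtype_compl,
        Fintype.card_fin, Fintype.card_coe, hcard]
      omega
    rw [this]
    rfl

end MvPolynomial

/-- If every prime containing `I` contains an ideal of a family whose quotients all have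
dimension at most `d`, then `R ⧸ I` has dimension at most `d`. -/
lemma ringKrullDim_quotient_le_of_forall_isPrime {R : Type*} [CommRing R] (I : Ideal R)
    (d : WithBot ℕ∞)
    (h : ∀ p : Ideal R, p.IsPrime → I ≤ p → ∃ q ≤ p, ringKrullDim (R ⧸ q) ≤ d) :
    ringKrullDim (R ⧸ I) ≤ d := by
  rw [ringKrullDim_quotient]
  refine iSup_le fun c => ?_
  obtain ⟨q, hq, hd⟩ := h c.head.1.asIdeal c.head.1.isPrime c.head.2
  rw [ringKrullDim_quotient] at hd
  refine le_trans ?_ hd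
  let c' : LTSeries (PrimeSpectrum.zeroLocus (q : Set R)) :=
    { length := c.length
      toFun := fun i => ⟨(c i).1, hq.trans (LTSeries.head_le c i)⟩
      step := c.step }
  exact Order.LTSeries.length_le_krullDim c'

/-- For linear forms `L j i` in `R = K[x_0,…,x_n]` satisfying condition
(α), with `f j = ∏ i, L j i` and `I = (f_i f_j : i < j)` the defining ideal of a complete
grid or pseudo-grid of lines, the ideal `I` has height `n-1` and `R/I` has Krull
dimension `2`. -/
theorem grid_ideal_height_and_dimension
    (K : Type) [Field K] [Infinite K] (n : ℕ) (hn : 2 ≤ n)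
    (ℓ : Fin n → ℕ) (hℓ : ∀ j, 0 < ℓ j)
    (L : (j : Fin n) → Fin (ℓ j) → MvPolynomial (Fin (n + 1)) K)
    (hLhom : ∀ j i, (L j i).IsHomogeneous 1)
    (hα : ∀ c : (j : Fin n) → Fin (ℓ j), LinearIndependent K (fun j => L j (c j)))
    (f : Fin n → MvPolynomial (Fin (n + 1)) K)
    (hf : ∀ j, f j = ∏ i : Fin (ℓ j), L j i) :
    idealHeight
        (Ideal.span {g : MvPolynomial (Fin (n + 1)) K | ∃ i j : Fin n, i < j ∧ g = f i * f j}) =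
      ((n - 1 : ℕ) : ℕ∞) ∧
    ringKrullDim
        (MvPolynomial (Fin (n + 1)) K ⧸
          Ideal.span {g : MvPolynomial (Fin (n + 1)) K | ∃ i j : Fin n, i < j ∧ g = f i * f j}) =
      2 := by
  set I := Ideal.span {g : MvPolynomial (Fin (n + 1)) K | ∃ i j : Fin n, i < j ∧ g = f i * f j}
    with hI
  have hle_prime : ∀ p : Ideal (MvPolynomial (Fin (n + 1)) K), p.IsPrime → I ≤ p →
      ∃ (c : (j : Fin n) → Fin (ℓ j)) (j₀ : Fin n),
        Ideal.span ((fun j => L j (c j)) '' {j₀}ᶜ) ≤ p := by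
    intro p hp hIp
    obtain ⟨j₀, hj₀⟩ : ∃ j₀, ∀ j, j ≠ j₀ → f j ∈ p := by
      by_cases h : ∃ j₀, f j₀ ∉ p
      · obtain ⟨j₀, h₀⟩ := h
        refine ⟨j₀, fun j hj => ?_⟩
        rcases lt_or_gt_of_ne hj with hlt | hlt
        · exact (hp.mem_or_mem (hIp (Ideal.subset_span ⟨j, j₀, hlt, rfl⟩))).resolve_right h₀
        · exact (hp.mem_or_mem (hIp (Ideal.subset_span ⟨j₀, j, hlt, rfl⟩))).resolve_left h₀
      · push Not at h
        exact ⟨⟨0, by omega⟩, fun j _ => h j⟩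
    have hfac : ∀ j, ∃ i, j ≠ j₀ → L j i ∈ p := by
      intro j
      by_cases hj : j = j₀
      · exact ⟨⟨0, hℓ j⟩, fun h => absurd hj h⟩
      · have := hj₀ j hj
        rw [hf, Ideal.IsPrime.prod_mem_iff] at this
        obtain ⟨i, -, hi⟩ := this
        exact ⟨i, fun _ => hi⟩
    choose c hc using hfac
    refine ⟨c, j₀, Ideal.span_le.mpr ?_⟩
    rintro _ ⟨j, hj, rfl⟩
    exact hc j hj
  have hprop := fun (c : (j : Fin n) → Fin (ℓ j)) (j₀ : Fin n) =>
    span_linearForms_isPrime_height_ringKrullDim (fun j => L j (c j))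
      (fun j => hLhom j (c j)) (hα c) j₀
  let c₀ : (j : Fin n) → Fin (ℓ j) := fun j => ⟨0, hℓ j⟩
  let k : Fin n := ⟨0, by omega⟩
  set q := Ideal.span ((fun j => L j (c₀ j)) '' {k}ᶜ) with hq
  obtain ⟨hqp, hqh, hqd⟩ := hprop c₀ k
  have hIq : I ≤ q := by
    have hmem : ∀ j, j ≠ k → f j ∈ q := fun j hj => by
      rw [hf]
      exact q.mem_of_dvd (Finset.dvd_prod_of_mem _ (Finset.mem_univ (c₀ j)))
        (Ideal.subset_span ⟨j, hj, rfl⟩)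
    rw [hI, Ideal.span_le]
    rintro _ ⟨i, j, hij, rfl⟩
    exact q.mul_mem_left _ (hmem j (Fin.ne_of_gt (lt_of_le_of_lt (Nat.zero_le i.1) hij)))
  refine ⟨le_antisymm ?_ ?_, le_antisymm ?_ ?_⟩
  · refine iInf₂_le_of_le ⟨q, hqp⟩ hIq ?_
    rw [← PrimeSpectrum.height_eq_orderHeight]
    exact hqh.le
  · refine le_iInf₂ fun p hp => ?_
    obtain ⟨c, j₀, hle⟩ := hle_prime p.asIdeal p.isPrime hp
    rw [← PrimeSpectrum.height_eq_orderHeight, ← (hprop c j₀).2.1]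
    exact Ideal.height_mono hle
  · refine ringKrullDim_quotient_le_of_forall_isPrime I 2 fun p hp hIp => ?_
    obtain ⟨c, j₀, hle⟩ := hle_prime p hp hIp
    exact ⟨_, hle, (hprop c j₀).2.2.le⟩
  · rw [← hqd]
    exact ringKrullDim_le_of_surjective (Ideal.Quotient.factor hIq)
      (Ideal.Quotient.factor_surjective hIq)
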